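/- arXiv:2509.06435 — 2 statements merged into one kernel-verified Lean document; each statement's English description precedes it below -/
import Mathlib

section
/- Let I_k be a minimum-weight common independent set of size k of matroids M₁ and M₂, and let P be a directed path from X₁ to X₂ in the exchange graph 𝓔(M₁,M₂,I_k) of minimum weight, and of minimum hop-length among the X₁–X₂ paths of minimum weight. Then the symmetric difference I_k Δ V(P) of I_k with the vertex set of P is a common independent set of size k+1, and it is a minimum-weight common independent set of size k+1. -/
/-- `I` is a common independent set of the matroids `M₁` and `M₂`. -/
def CommonIndep {α : Type*} (M₁ M₂ : Matroid α) (I : Finset α) : Prop :=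
  M₁.Indep ↑I ∧ M₂.Indep ↑I

/-- The weight `W(I) = ∑_{s ∈ I} W(s)` of a set. -/
def setW {α : Type*} (W : α → ℤ) (I : Finset α) : ℤ := ∑ x ∈ I, W x

/-- Adjacency in the exchange graph `𝓔(M₁,M₂,I)`: for `y ∈ I` and `x ∉ I` there is an
edge `(y,x)` iff `(I \ {y}) ∪ {x} ∈ 𝓘₁`, and an edge `(x,y)` iff `(I \ {y}) ∪ {x} ∈ 𝓘₂`. -/
def ExchAdj {α : Type*} [DecidableEq α] (M₁ M₂ : Matroid α) (I : Finset α) (u v : α) : Prop :=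
  (u ∈ I ∧ v ∉ I ∧ M₁.Indep ↑(insert v (I.erase u))) ∨
  (u ∉ I ∧ v ∈ I ∧ M₂.Indep ↑(insert u (I.erase v)))

/-- The vertex weights of the exchange graph: `l(s) = -W(s)` if `s ∈ I`, else `l(s) = W(s)`. -/
def exchWt {α : Type*} [DecidableEq α] (W : α → ℤ) (I : Finset α) (s : α) : ℤ :=
  if s ∈ I then -W s else W s

/-- The weight of a walk/path/cycle given by the vertex list `l`: the sum of the vertex
weights over `l`. -/
def listW {α : Type*} [DecidableEq α] (W : α → ℤ) (I : Finset α) (l : List α) : ℤ :=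
  (l.map (exchWt W I)).sum

/-- `l` is (the vertex list of) a simple directed cycle for the adjacency relation `Adj`. -/
def IsCycle {α : Type*} (Adj : α → α → Prop) (l : List α) : Prop :=
  ∃ h : l ≠ [], l.Chain' Adj ∧ Adj (l.getLast h) (l.head h) ∧ l.Nodup

/-- `x ∈ X₁`, i.e. `x ∉ I` and `I ∪ {x} ∈ 𝓘₁` (and analogously for `X₂` with `M₂`). -/
def memX {α : Type*} [DecidableEq α] (M : Matroid α) (I : Finset α) (x : α) : Prop :=
  x ∉ I ∧ M.Indep ↑(insert x I)

/-- `l` is (the vertex list of) a simple directed path from `X₁` to `X₂` in the exchange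
graph `𝓔(M₁,M₂,I)`. -/
def IsXPath {α : Type*} [DecidableEq α] (M₁ M₂ : Matroid α) (I : Finset α) (l : List α) : Prop :=
  ∃ h : l ≠ [], l.Chain' (ExchAdj M₁ M₂ I) ∧ l.Nodup ∧
    memX M₁ I (l.head h) ∧ memX M₂ I (l.getLast h)

/-- `I` is a minimum-weight common independent set of size `k` (not necessarily unique). -/
def IsMinWtOfSize {α : Type*} (M₁ M₂ : Matroid α) (W : α → ℤ) (k : ℕ) (I : Finset α) : Prop :=
  CommonIndep M₁ M₂ I ∧ I.card = k ∧
    ∀ J : Finset α, CommonIndep M₁ M₂ J → J.card = k → setW W I ≤ setW W J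

/-- `W` isolates the size-`k` common independent set `I`: `I` is the unique minimum-weight
common independent set of size `k`. -/
def Isolates {α : Type*} (M₁ M₂ : Matroid α) (W : α → ℤ) (k : ℕ) (I : Finset α) : Prop :=
  CommonIndep M₁ M₂ I ∧ I.card = k ∧
    ∀ J : Finset α, CommonIndep M₁ M₂ J → J.card = k → J ≠ I → setW W I < setW W J

/-!
A common independent set `I` has minimum weight for its size as soon as `W = U₁ + U₂` where `I` has
minimum `Uᵢ`-weight in `Mᵢ` for its size (Frank's weight splitting). Along an `X₁`–`X₂` path the
weights `U₁` and `U₂` telescope, so lower bounds `D₁` of `U₁` on `X₁` and `D₂` of `U₂` on `X₂` bound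
the weight of every path by `D₁ + D₂`, with equality iff every edge exchanges elements of equal
weight. A primal-dual argument raises this bound until it is attained by `P`.

As `P` is shortest, no tight edge skips part of it, and the exchanges along `P` are triangular in
each matroid once sorted by `Uᵢ`-weight. Hence `I Δ P` is independent in both matroids. Its
`Uᵢ`-weight exceeds that of `I` by `Dᵢ`, the least possible increase, so `U₁ + U₂` is also a
splitting for `I Δ P`. Augmenting repeatedly from `∅` provides minimum-weight sets of every
attainable size with a splitting, and a splitting for one of them serves all those of the same size.
-/

section Exchange

variable {α ι R : Type*} {M : Matroid α}

theorem exists_symm_exchange_of_not_indep_insert {I J : Set α} {x : α} (hI : M.Indep I)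
    (hJ : M.Indep J) (hxJ : x ∈ J) (hxI : ¬ M.Indep (insert x I)) :
    ∃ y ∈ I \ J, M.Indep (insert x I \ {y}) ∧ M.Indep (insert y (J \ {x})) := by
  have hx : x ∉ I := fun h => hxI (by rwa [Set.insert_eq_of_mem h])
  have hxcl : x ∈ M.closure I := by
    by_contra h
    exact hxI ((hI.notMem_closure_iff_of_notMem hx (hJ.subset_ground hxJ)).1 h)
  obtain ⟨y, ⟨hyC, hyx⟩, hy⟩ :
      ∃ y ∈ M.fundCircuit x I \ {x}, y ∉ M.closure (J \ {x}) := by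
    by_contra! hC
    refine hJ.notMem_closure_sdiff_of_mem hxJ
      (M.closure_subset_closure_of_subset_closure hC ?_)
    exact (hI.fundCircuit_isCircuit hxcl hx).mem_closure_sdiff_singleton_of_mem
      (M.mem_fundCircuit x I)
  have hyI : y ∈ I := (M.fundCircuit_subset_insert x I hyC).resolve_left hyx
  have hyE : y ∈ M.E := hI.subset_ground hyI
  have hyJ : y ∉ J := fun h => hy (M.mem_closure_of_mem' ⟨h, hyx⟩)
  exact ⟨y, ⟨hyI, hyJ⟩, (hI.mem_fundCircuit_iff hxcl hx).1 hyC,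
    ((hJ.sdiff _).notMem_closure_iff_of_notMem fun h => hyJ h.1).1 hy⟩

/-- Exchanging the pair of smallest rank first keeps the remaining pairs triangular. -/
theorem indep_of_triangular_exchange [LinearOrder R] (x y : ι → α) (r : ι → R) (s : Finset ι)
    {B : Set α} (hr : Set.InjOn r s) (hB : M.Indep B)
    (hdiag : ∀ i ∈ s, x i ∈ M.E \ M.closure (B \ {y i}))
    (hlt : ∀ i ∈ s, ∀ j ∈ s, r i < r j → x j ∈ M.closure (B \ {y i})) :
    M.Indep ((B \ y '' s) ∪ x '' s) := by
  classical
  induction s using Finset.induction_on_min_value r generalizing B with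
  | empty => simpa using hB
  | insert i s his hmin ih =>
    simp only [Finset.forall_mem_insert] at hdiag hlt
    obtain ⟨hi, hs⟩ := hdiag
    have hri : ∀ j ∈ s, r i < r j := fun j hj => (hmin j hj).lt_of_ne fun h =>
      his (hr (by simp) (by simp [hj]) h ▸ hj)
    have hxcl : ∀ j ∈ s, x j ∈ M.closure (B \ {y i}) := fun j hj => hlt.1.2 j hj (hri j hj)
    have hB' : M.Indep (insert (x i) (B \ {y i})) := (hB.sdiff _).insert_indep_iff.2 (.inl hi)
    have hcap : ∀ {S : Set α} {z : α}, M.Indep (S ∪ B \ {y i}) → z ∈ M.closure S →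
        z ∈ M.closure (B \ {y i}) → z ∈ M.closure (S ∩ (B \ {y i})) := fun hS h₁ h₂ => by
      rw [hS.closure_inter_eq_inter_closure]; exact ⟨h₁, h₂⟩
    refine (ih (hr.mono (by simp)) hB' (fun j hj => ⟨(hs j hj).1, fun h => ?_⟩)
      fun a ha b hb hab => ?_).subset ?_
    · refine (hs j hj).2 (M.closure_subset_closure ?_ (hcap (hB'.subset ?_) h (hxcl j hj)))
      · grind
      · grind
    · refine M.closure_subset_closure ?_
        (hcap (hB.subset ?_) ((hlt.2 a ha).2 b hb hab) (hxcl b hb))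
      · grind
      · grind
    · have hxy : ∀ j ∈ s, x i ≠ y j := fun j hj h => by
        refine (hs j hj).2 (M.closure_subset_closure ?_ (hxcl j hj))
        have hxB : x i ∉ B \ {y i} := fun hmem => hi.2 (M.mem_closure_of_mem' hmem hi.1)
        grind
      simp only [Finset.coe_insert, Set.image_insert_eq]
      grind

end Exchange

section MinIndep

variable {α : Type*} {M : Matroid α} {U : α → ℤ} {I J : Finset α} {c : ℤ}

/-- `I` is an independent set of minimum `U`-weight among the independent sets of its size. -/
def IsMinIndep (M : Matroid α) (U : α → ℤ) (I : Finset α) : Prop :=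
  M.Indep ↑I ∧ ∀ J : Finset α, M.Indep ↑J → J.card = I.card → setW U I ≤ setW U J

theorem IsMinIndep.of_setW_le (h : IsMinIndep M U I) (hJ : M.Indep ↑J)
    (hcard : J.card = I.card) (hle : setW U J ≤ setW U I) : IsMinIndep M U J :=
  ⟨hJ, fun K hK hKJ => hle.trans (h.2 K hK (hKJ.trans hcard))⟩

variable [DecidableEq α]

theorem indep_insert_erase_iff (hI : M.Indep ↑I) {x y : α} (hx : x ∉ I) :
    M.Indep ↑(insert x (I.erase y)) ↔ x ∈ M.E \ M.closure (↑I \ {y}) := by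
  rw [Finset.coe_insert, Finset.coe_erase, (hI.sdiff _).insert_indep_iff, or_iff_left]
  exact fun h => hx h.1

theorem IsMinIndep.le_of_indep_swap (h : IsMinIndep M U I) {x y : α} (hy : y ∈ I) (hx : x ∉ I)
    (hxy : M.Indep ↑(insert x (I.erase y))) : U y ≤ U x := by
  have hx' : x ∉ I.erase y := fun h => hx (Finset.mem_of_mem_erase h)
  have hle := h.2 _ hxy (by rw [Finset.card_insert_of_notMem hx', Finset.card_erase_add_one hy])
  simp only [setW, Finset.sum_insert hx', ← Finset.sum_erase_add _ _ hy] at hle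
  linarith

theorem setW_le_setW_of_forall_swap
    (hswap : ∀ y ∈ I, ∀ x ∉ I, M.Indep ↑(insert x (I.erase y)) → U y ≤ U x)
    (hI : M.Indep ↑I) (hneg : ∀ y ∈ I, U y ≤ 0) (hpos : ∀ x, memX M I x → 0 ≤ U x)
    (hJ : M.Indep ↑J) : setW U I ≤ setW U J := by
  induction hn : (J \ I).card generalizing J with
  | zero =>
    rw [Finset.card_eq_zero, Finset.sdiff_eq_empty_iff_subset] at hn
    have := Finset.sum_nonpos fun y (hy : y ∈ I \ J) => hneg y (Finset.sdiff_subset hy)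
    have := Finset.sum_sdiff (f := U) hn
    simp only [setW]
    linarith
  | succ n ih =>
    obtain ⟨x, hx⟩ : (J \ I).Nonempty := by rw [← Finset.card_pos]; lia
    obtain ⟨hxJ, hxI⟩ := Finset.mem_sdiff.1 hx
    have hcard : (J.erase x \ I).card = n := by
      rw [Finset.erase_sdiff_comm, Finset.card_erase_of_mem hx, hn, Nat.add_sub_cancel]
    have hsum : setW U (J.erase x) + U x = setW U J := Finset.sum_erase_add _ _ hxJ
    by_cases hins : M.Indep (insert x (I : Set α))
    · have := ih (hJ.subset (by simp)) hcard
      have := hpos x ⟨hxI, by simpa using hins⟩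
      linarith
    · obtain ⟨y, ⟨hyI, hyJ⟩, hIy, hJy⟩ :=
        exists_symm_exchange_of_not_indep_insert hI hJ hxJ hins
      have hle : U y ≤ U x := by
        refine hswap y hyI x hxI (hIy.subset ?_)
        grind
      have := ih (J := insert y (J.erase x)) (by simpa using hJy)
        (by rwa [Finset.insert_sdiff_of_mem _ hyI])
      have : setW U (insert y (J.erase x)) = U y + setW U (J.erase x) :=
        Finset.sum_insert fun h => hyJ (Finset.mem_of_mem_erase h)
      linarith

theorem le_of_indep_swap_of_memX
    (hswap : ∀ y ∈ I, ∀ x ∉ I, M.Indep ↑(insert x (I.erase y)) → U y ≤ U x) {x y : α}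
    (hx : memX M I x) (hy : y ∈ I) : U y ≤ U x :=
  hswap y hy x hx.1 (hx.2.subset (by grind))

theorem setW_add_mul_le_setW_of_forall_swap
    (hswap : ∀ y ∈ I, ∀ x ∉ I, M.Indep ↑(insert x (I.erase y)) → U y ≤ U x)
    (hI : M.Indep ↑I) (hc : ∀ x, memX M I x → c ≤ U x) (hJ : M.Indep ↑J)
    (hIJ : I.card ≤ J.card) : setW U I + c * (J.card - I.card) ≤ setW U J := by
  -- Shifting `U` by a threshold between its values on `I` and on the extensions of `I` gives the
  -- signs needed to compare sets of different sizes.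
  obtain ⟨c', hcc', hIc', hXc'⟩ :
      ∃ c' ≥ c, (∀ y ∈ I, U y ≤ c') ∧ ∀ x, memX M I x → c' ≤ U x := by
    have hne : (insert c (I.image U)).Nonempty := Finset.insert_nonempty _ _
    refine ⟨(insert c (I.image U)).max' hne, Finset.le_max' _ _ (by simp),
      fun y hy => Finset.le_max' _ _ (by grind), fun x hx => Finset.max'_le _ _ _ ?_⟩
    simp only [Finset.forall_mem_insert, Finset.forall_mem_image]
    exact ⟨hc x hx, fun y hy => le_of_indep_swap_of_memX hswap hx hy⟩
  have hle := setW_le_setW_of_forall_swap (U := fun v => U v - c') (J := J)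
    (fun y hy x hx h => by linarith [hswap y hy x hx h]) hI
    (fun y hy => by linarith [hIc' y hy]) (fun x hx => by linarith [hXc' x hx]) hJ
  simp only [setW, Finset.sum_sub_distrib, Finset.sum_const, nsmul_eq_mul] at hle ⊢
  have : c * ((J.card : ℤ) - I.card) ≤ c' * (J.card - I.card) :=
    mul_le_mul_of_nonneg_right hcc' (by simpa using hIJ)
  linarith

theorem isMinIndep_iff_forall_swap : IsMinIndep M U I ↔
    M.Indep ↑I ∧ ∀ y ∈ I, ∀ x ∉ I, M.Indep ↑(insert x (I.erase y)) → U y ≤ U x := by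
  refine ⟨fun h => ⟨h.1, fun y hy x hx => h.le_of_indep_swap hy hx⟩, fun ⟨hI, hswap⟩ =>
    ⟨hI, fun J hJ hIJ => ?_⟩⟩
  obtain rfl | ⟨y, hy⟩ := I.eq_empty_or_nonempty
  · rw [Finset.card_empty, Finset.card_eq_zero] at hIJ
    rw [hIJ]
  · simpa [hIJ] using setW_add_mul_le_setW_of_forall_swap hswap hI
      (fun x hx => le_of_indep_swap_of_memX hswap hx hy) hJ hIJ.ge

theorem IsMinIndep.setW_add_le_setW (h : IsMinIndep M U I) (hc : ∀ x, memX M I x → c ≤ U x)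
    (hJ : M.Indep ↑J) (hIJ : J.card = I.card + 1) : setW U I + c ≤ setW U J := by
  have := setW_add_mul_le_setW_of_forall_swap (isMinIndep_iff_forall_swap.1 h).2 h.1 hc hJ (by lia)
  simpa [hIJ] using this

theorem exists_le_of_memX [M.Finite] (U : α → ℤ) (I : Finset α) :
    ∃ D, ∀ x, memX M I x → D ≤ U x := by
  obtain ⟨D, hD⟩ := (M.ground_finite.image U).bddBelow
  exact ⟨D, fun x hx => hD ⟨x, hx.2.subset_ground (by simp), rfl⟩⟩

end MinIndep

section ExchangeGraph

variable {α : Type*} {M₁ M₂ : Matroid α} {U : α → ℤ} {I : Finset α} {P : List α} {D : ℤ}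

theorem setW_add (U₁ U₂ : α → ℤ) (I : Finset α) : setW (U₁ + U₂) I = setW U₁ I + setW U₂ I :=
  Finset.sum_add_distrib

variable [DecidableEq α]

theorem setW_symmDiff (U : α → ℤ) (I : Finset α) (hP : P.Nodup) :
    setW U (symmDiff I P.toFinset) = setW U I + listW U I P := by
  have hlist : listW U I P = ∑ v ∈ P.toFinset \ I, U v - ∑ v ∈ P.toFinset ∩ I, U v := by
    have : listW U I P = ∑ v ∈ P.toFinset, if v ∈ I then -U v else U v :=
      (List.sum_toFinset _ hP).symm
    rw [this, Finset.sum_ite, Finset.sum_neg_distrib, Finset.filter_mem_eq_inter,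
      Finset.filter_notMem_eq_sdiff]
    ring
  rw [hlist, setW, setW, symmDiff_def, Finset.sup_eq_union, Finset.sum_union disjoint_sdiff_sdiff,
    ← Finset.sum_inter_add_sum_sdiff I P.toFinset U, Finset.inter_comm]
  ring

theorem listW_cons (U : α → ℤ) (I : Finset α) (v : α) (P : List α) :
    listW U I (v :: P) = exchWt U I v + listW U I P := by
  simp only [listW, List.map_cons, List.sum_cons]

theorem listW_add (U₁ U₂ : α → ℤ) (I : Finset α) (P : List α) :
    listW (U₁ + U₂) I P = listW U₁ I P + listW U₂ I P := by
  induction P with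
  | nil => rfl
  | cons v P ih =>
    have : exchWt (U₁ + U₂) I v = exchWt U₁ I v + exchWt U₂ I v := by
      simp only [exchWt, Pi.add_apply]; split_ifs <;> ring
    rw [listW_cons, listW_cons, listW_cons, ih, this]
    ring

theorem listW_reverse (U : α → ℤ) (I : Finset α) (P : List α) :
    listW U I P.reverse = listW U I P := by
  simp only [listW, List.map_reverse, List.sum_reverse]

theorem exchAdj_swap {u v : α} : ExchAdj M₂ M₁ I u v ↔ ExchAdj M₁ M₂ I v u := by
  unfold ExchAdj; tauto

theorem isXPath_iff : IsXPath M₁ M₂ I P ↔ P ≠ [] ∧ P.IsChain (ExchAdj M₁ M₂ I) ∧ P.Nodup ∧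
    (∀ v ∈ P.head?, memX M₁ I v) ∧ ∀ v ∈ P.getLast?, memX M₂ I v := by
  refine ⟨fun ⟨hne, hc, hnd, h₁, h₂⟩ => ⟨hne, hc, hnd, ?_, ?_⟩, fun ⟨hne, hc, hnd, h₁, h₂⟩ =>
    ⟨hne, hc, hnd, h₁ _ (List.head?_eq_some_head hne), h₂ _ (List.getLast?_eq_some_getLast hne)⟩⟩
  · simpa [List.head?_eq_some_head hne] using h₁
  · simpa [List.getLast?_eq_some_getLast hne] using h₂

theorem IsXPath.reverse (h : IsXPath M₁ M₂ I P) : IsXPath M₂ M₁ I P.reverse := by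
  rw [isXPath_iff] at h ⊢
  obtain ⟨hne, hc, hnd, h₁, h₂⟩ := h
  refine ⟨List.reverse_ne_nil_iff.2 hne, List.isChain_reverse.2 (hc.imp fun u v => exchAdj_swap.2),
    List.nodup_reverse.2 hnd, ?_, ?_⟩
  · rwa [List.head?_reverse]
  · rwa [List.getLast?_reverse]

/-- Along a walk the weights telescope: each pair `u ∈ I`, `w ∉ I` of consecutive vertices
contributes `U w - U u ≥ 0`. -/
theorem IsMinIndep.le_listW_cons_and_eq_iff (hU : IsMinIndep M₁ U I) {v : α} {l : List α}
    (hc : (v :: l).IsChain (ExchAdj M₁ M₂ I)) (hlast : ∀ w ∈ (v :: l).getLast?, w ∉ I) :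
    (if v ∈ I then 0 else U v) ≤ listW U I (v :: l) ∧
      (listW U I (v :: l) = (if v ∈ I then 0 else U v) ↔
        (v :: l).IsChain fun u w => u ∈ I → U u = U w) := by
  induction l generalizing v with
  | nil => simp_all [listW, exchWt]
  | cons w l ih =>
    rw [List.isChain_cons_cons] at hc
    obtain ⟨hle, heq⟩ := ih hc.2 (by simpa only [List.getLast?_cons_cons] using hlast)
    rw [listW_cons, List.isChain_cons_cons, ← heq, exchWt]
    obtain ⟨hv, hw, hvw⟩ | ⟨hv, hw, -⟩ := hc.1
    · have := hU.le_of_indep_swap hv hw hvw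
      simp only [hv, hw, if_true, if_false, true_imp_iff] at hle ⊢
      lia
    · simp only [hv, hw, if_true, if_false, false_imp_iff] at hle ⊢
      lia

theorem IsXPath.le_listW_and_eq_iff (hP : IsXPath M₁ M₂ I P) (hU : IsMinIndep M₁ U I)
    (hD : ∀ x, memX M₁ I x → D ≤ U x) : D ≤ listW U I P ∧
      (listW U I P = D ↔
        (∀ x ∈ P.head?, U x = D) ∧ P.IsChain fun u w => u ∈ I → U u = U w) := by
  obtain ⟨hne, hc, -, h₁, h₂⟩ := isXPath_iff.1 hP
  obtain ⟨v, l, rfl⟩ := List.exists_cons_of_ne_nil hne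
  have hv : memX M₁ I v := h₁ v rfl
  obtain ⟨hle, heq⟩ := hU.le_listW_cons_and_eq_iff hc fun w hw => (h₂ w hw).1
  have := hD v hv
  rw [← heq]
  simp only [hv.1, if_false, List.head?_cons, Option.mem_some_iff, forall_eq'] at hle ⊢
  lia

theorem IsXPath.card_symmDiff (hP : IsXPath M₁ M₂ I P) (hI : M₁.Indep ↑I) :
    (symmDiff I P.toFinset).card = I.card + 1 := by
  have hcard : ∀ J : Finset α, setW 1 J = J.card := fun J => by simp [setW]
  have hone : listW 1 I P = 1 := by
    have hmin : IsMinIndep M₁ 1 I := ⟨hI, fun J _ hJ => by rw [hcard, hcard, hJ]⟩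
    exact (hP.le_listW_and_eq_iff hmin fun x _ => le_rfl).2.2
      ⟨fun _ _ => rfl, hP.2.1.imp fun _ _ _ _ => rfl⟩
  have := setW_symmDiff 1 I hP.2.2.1
  rw [hcard, hcard, hone] at this
  exact_mod_cast this

theorem IsXPath.exists_getElem_eq_of_mem_tail (h : IsXPath M₁ M₂ I P) {x : α} (hx : x ∈ P.tail)
    (hxI : x ∉ I) : ∃ i, ∃ hi : i + 1 < P.length, P[i] ∈ I ∧ P[i + 1] = x := by
  obtain ⟨i, hi, rfl⟩ := List.getElem_of_mem hx
  rw [List.length_tail] at hi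
  rw [List.getElem_tail] at hxI ⊢
  have hadj := List.isChain_iff_getElem.1 h.2.1 i (by lia)
  exact ⟨i, by lia, (hadj.resolve_right fun h => hxI h.2.1).1, rfl⟩

end ExchangeGraph

section Splitting

variable {α : Type*} {M₁ M₂ : Matroid α} {W U₁ U₂ : α → ℤ} {I : Finset α} {P : List α}
  {D₁ D₂ : ℤ} {u v : α}

/-- Frank's optimality certificate for a common independent set `I`: a decomposition
`W = U₁ + U₂` such that `I` has minimum `Uᵢ`-weight in `Mᵢ` among the sets of its size. -/
structure IsWeightSplitting (M₁ M₂ : Matroid α) (W : α → ℤ) (I : Finset α) (U₁ U₂ : α → ℤ) :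
    Prop where
  add_eq : U₁ + U₂ = W
  left : IsMinIndep M₁ U₁ I
  right : IsMinIndep M₂ U₂ I

theorem IsWeightSplitting.isMinWtOfSize (h : IsWeightSplitting M₁ M₂ W I U₁ U₂) :
    IsMinWtOfSize M₁ M₂ W I.card I := by
  refine ⟨⟨h.left.1, h.right.1⟩, rfl, fun J hJ hcard => ?_⟩
  rw [← h.add_eq, setW_add, setW_add]
  exact add_le_add (h.left.2 J hJ.1 hcard) (h.right.2 J hJ.2 hcard)

variable [DecidableEq α]

/-- A weight splitting with lower bounds `D₁` and `D₂` for the weights of the sources and the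
sinks: it certifies that every `X₁`–`X₂` path has weight at least `D₁ + D₂`. -/
structure IsPathBound (M₁ M₂ : Matroid α) (W : α → ℤ) (I : Finset α) (U₁ U₂ : α → ℤ)
    (D₁ D₂ : ℤ) : Prop extends IsWeightSplitting M₁ M₂ W I U₁ U₂ where
  le_left : ∀ x, memX M₁ I x → D₁ ≤ U₁ x
  le_right : ∀ x, memX M₂ I x → D₂ ≤ U₂ x

/-- The edges of the exchange graph that exchange two elements of equal weight, with respect to
`U₁` for the edges given by `M₁` and to `U₂` for those given by `M₂`. -/
def TightAdj (M₁ M₂ : Matroid α) (I : Finset α) (U₁ U₂ : α → ℤ) (u v : α) : Prop :=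
  ExchAdj M₁ M₂ I u v ∧ (u ∈ I → U₁ u = U₁ v) ∧ (v ∈ I → U₂ v = U₂ u)

/-- An `X₁`–`X₂` path for which the bound of `IsPathBound` is attained edge by edge. -/
structure IsTightPath (M₁ M₂ : Matroid α) (I : Finset α) (U₁ U₂ : α → ℤ) (D₁ D₂ : ℤ)
    (P : List α) : Prop where
  ne_nil : P ≠ []
  nodup : P.Nodup
  isChain : P.IsChain (TightAdj M₁ M₂ I U₁ U₂)
  head : ∀ x ∈ P.head?, memX M₁ I x ∧ U₁ x = D₁
  getLast : ∀ x ∈ P.getLast?, memX M₂ I x ∧ U₂ x = D₂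

theorem tightAdj_swap : TightAdj M₂ M₁ I U₂ U₁ u v ↔ TightAdj M₁ M₂ I U₁ U₂ v u := by
  simp only [TightAdj, exchAdj_swap (M₁ := M₁), and_comm (a := u ∈ I → _)]

theorem IsTightPath.reverse (h : IsTightPath M₁ M₂ I U₁ U₂ D₁ D₂ P) :
    IsTightPath M₂ M₁ I U₂ U₁ D₂ D₁ P.reverse where
  ne_nil := List.reverse_ne_nil_iff.2 h.ne_nil
  nodup := List.nodup_reverse.2 h.nodup
  isChain := List.isChain_reverse.2 (h.isChain.imp fun _ _ => tightAdj_swap.2)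
  head := by simpa only [List.head?_reverse] using h.getLast
  getLast := by simpa only [List.getLast?_reverse] using h.head

theorem IsTightPath.isXPath (h : IsTightPath M₁ M₂ I U₁ U₂ D₁ D₂ P) : IsXPath M₁ M₂ I P :=
  isXPath_iff.2 ⟨h.ne_nil, h.isChain.imp fun _ _ => And.left, h.nodup,
    fun x hx => (h.head x hx).1, fun x hx => (h.getLast x hx).1⟩

theorem IsTightPath.listW_left (h : IsTightPath M₁ M₂ I U₁ U₂ D₁ D₂ P) (hU : IsMinIndep M₁ U₁ I)
    (hD : ∀ x, memX M₁ I x → D₁ ≤ U₁ x) : listW U₁ I P = D₁ :=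
  (h.isXPath.le_listW_and_eq_iff hU hD).2.2
    ⟨fun x hx => (h.head x hx).2, h.isChain.imp fun _ _ huv => huv.2.1⟩

theorem IsPathBound.le_listW (h : IsPathBound M₁ M₂ W I U₁ U₂ D₁ D₂)
    (hP : IsXPath M₁ M₂ I P) : D₁ + D₂ ≤ listW W I P := by
  rw [← h.add_eq, listW_add, ← listW_reverse U₂]
  exact add_le_add (hP.le_listW_and_eq_iff h.left h.le_left).1
    (hP.reverse.le_listW_and_eq_iff h.right h.le_right).1

theorem IsPathBound.isTightPath_iff (h : IsPathBound M₁ M₂ W I U₁ U₂ D₁ D₂) :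
    IsTightPath M₁ M₂ I U₁ U₂ D₁ D₂ P ↔ IsXPath M₁ M₂ I P ∧ listW W I P = D₁ + D₂ := by
  rw [← h.add_eq, listW_add, ← listW_reverse U₂]
  refine ⟨fun hP => ⟨hP.isXPath, ?_⟩, fun ⟨hP, heq⟩ => ?_⟩
  · rw [hP.listW_left h.left h.le_left, hP.reverse.listW_left h.right h.le_right]
  obtain ⟨hle₁, heq₁⟩ := hP.le_listW_and_eq_iff h.left h.le_left
  obtain ⟨hle₂, heq₂⟩ := hP.reverse.le_listW_and_eq_iff h.right h.le_right
  obtain ⟨hhead, hc₁⟩ := heq₁.1 (by linarith only [heq, hle₁, hle₂])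
  obtain ⟨hlast, hc₂⟩ := heq₂.1 (by linarith only [heq, hle₁, hle₂])
  rw [List.isChain_reverse] at hc₂
  rw [List.head?_reverse] at hlast
  obtain ⟨hne, hc, hnd, h₁, h₂⟩ := isXPath_iff.1 hP
  refine ⟨hne, hnd, ?_, fun x hx => ⟨h₁ x hx, hhead x hx⟩, fun x hx => ⟨h₂ x hx, hlast x hx⟩⟩
  rw [List.isChain_iff_getElem] at hc hc₁ hc₂ ⊢
  exact fun i hi => ⟨hc i hi, hc₁ i hi, hc₂ i hi⟩

end Splitting

section ShortestTightPath

variable {α : Type*} [DecidableEq α] {M₁ M₂ : Matroid α} {W U₁ U₂ : α → ℤ} {I : Finset α}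
  {P : List α} {D₁ D₂ : ℤ}

theorem IsTightPath.drop (h : IsTightPath M₁ M₂ I U₁ U₂ D₁ D₂ P) {i : ℕ} (hi : i < P.length)
    (hX : memX M₁ I P[i]) (hD : U₁ P[i] = D₁) : IsTightPath M₁ M₂ I U₁ U₂ D₁ D₂ (P.drop i) where
  ne_nil := by simpa using hi
  nodup := h.nodup.sublist (List.drop_sublist i P)
  isChain := h.isChain.drop i
  head := by simpa [List.head?_drop, hi] using ⟨hX, hD⟩
  getLast := by simpa [List.getLast?_drop, hi.not_ge] using h.getLast

theorem IsTightPath.shortcut (h : IsTightPath M₁ M₂ I U₁ U₂ D₁ D₂ P) {i j : ℕ} (hij : i < j)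
    (hj : j < P.length) (hadj : TightAdj M₁ M₂ I U₁ U₂ P[i] P[j]) :
    IsTightPath M₁ M₂ I U₁ U₂ D₁ D₂ (P.take (i + 1) ++ P.drop j) where
  ne_nil := by simp [h.ne_nil]
  nodup := by
    refine h.nodup.sublist ?_
    conv_rhs => rw [← List.take_append_drop (i + 1) P]
    exact (List.Sublist.refl _).append (List.drop_sublist_drop_left P hij)
  isChain := by
    refine List.isChain_append.2 ⟨h.isChain.take _, h.isChain.drop _, ?_⟩
    have hi : i < P.length := hij.trans hj
    simpa [List.getLast?_take, List.head?_drop, hi, hj] using hadj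
  head := by simpa [List.head?_append, List.head?_take, h.ne_nil] using h.head
  getLast := by
    have hne : P.drop j ≠ [] := by simpa using hj
    simpa [List.getLast?_append_of_ne_nil _ hne, List.getLast?_drop, hj.not_ge] using h.getLast

theorem IsTightPath.indep_swap (h : IsTightPath M₁ M₂ I U₁ U₂ D₁ D₂ P) {i : ℕ}
    (hi : i + 1 < P.length) (hiI : P[i] ∈ I) :
    P[i + 1] ∉ I ∧ M₁.Indep ↑(insert P[i + 1] (I.erase P[i])) ∧ U₁ P[i] = U₁ P[i + 1] := by
  obtain ⟨hadj, htight, -⟩ := List.isChain_iff_getElem.1 h.isChain i hi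
  obtain ⟨-, hxI, hx⟩ := hadj.resolve_right fun h => h.1 hiI
  exact ⟨hxI, hx, htight hiI⟩

theorem IsTightPath.mem_closure (h : IsTightPath M₁ M₂ I U₁ U₂ D₁ D₂ P)
    (hU : IsMinIndep M₁ U₁ I) (hD : ∀ x, memX M₁ I x → D₁ ≤ U₁ x)
    (hmin : ∀ Q, IsTightPath M₁ M₂ I U₁ U₂ D₁ D₂ Q → P.length ≤ Q.length) {i : ℕ}
    (hi : i + 1 < P.length) (hiI : P[i] ∈ I) : P[i + 1] ∈ M₁.closure ↑I := by
  obtain ⟨hxI, hx, htight⟩ := h.indep_swap hi hiI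
  by_contra hcl
  have hxE : P[i + 1] ∈ M₁.E := hx.subset_ground (by simp)
  have hX : memX M₁ I P[i + 1] :=
    ⟨hxI, by rwa [Finset.coe_insert, ← hU.1.notMem_closure_iff_of_notMem hxI hxE]⟩
  obtain ⟨hX₀, hD₀⟩ := h.head _ (List.head?_eq_some_head h.ne_nil)
  have hle : U₁ P[i] ≤ U₁ (P.head h.ne_nil) :=
    le_of_indep_swap_of_memX (isMinIndep_iff_forall_swap.1 hU).2 hX₀ hiI
  have := hmin _ (h.drop hi hX (le_antisymm (by lia) (hD _ hX)))
  rw [List.length_drop] at this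
  lia

theorem IsTightPath.le_of_tightAdj (h : IsTightPath M₁ M₂ I U₁ U₂ D₁ D₂ P)
    (hmin : ∀ Q, IsTightPath M₁ M₂ I U₁ U₂ D₁ D₂ Q → P.length ≤ Q.length) {i j : ℕ}
    (hi : i < P.length) (hj : j < P.length) (hadj : TightAdj M₁ M₂ I U₁ U₂ P[i] P[j]) :
    j ≤ i + 1 := by
  by_contra! hij
  have := hmin _ (h.shortcut (by lia) hj hadj)
  rw [List.length_append, List.length_take, List.length_drop] at this
  lia

/-- An exchange of the elements `P[i]` and `P[j + 1]` would give a tight edge skipping part of the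
path. -/
theorem IsTightPath.mem_closure_sdiff (h : IsTightPath M₁ M₂ I U₁ U₂ D₁ D₂ P)
    (hU : IsMinIndep M₁ U₁ I)
    (hmin : ∀ Q, IsTightPath M₁ M₂ I U₁ U₂ D₁ D₂ Q → P.length ≤ Q.length) {i j : ℕ}
    (hi : i + 1 < P.length) (hj : j + 1 < P.length) (hiI : P[i] ∈ I) (hjI : P[j] ∈ I)
    (hij : U₁ P[j + 1] < U₁ P[i + 1] ∨ U₁ P[j + 1] = U₁ P[i + 1] ∧ i < j) :
    P[j + 1] ∈ M₁.closure (↑I \ {P[i]}) := by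
  obtain ⟨hjx, hindj, -⟩ := h.indep_swap hj hjI
  obtain ⟨-, -, htight⟩ := h.indep_swap hi hiI
  by_contra hcl
  have hswap : M₁.Indep ↑(insert P[j + 1] (I.erase P[i])) :=
    (indep_insert_erase_iff hU.1 hjx).2 ⟨((indep_insert_erase_iff hU.1 hjx).1 hindj).1, hcl⟩
  have hle := hU.le_of_indep_swap hiI hjx hswap
  have hadj : TightAdj M₁ M₂ I U₁ U₂ P[i] P[j + 1] :=
    ⟨.inl ⟨hiI, hjx, hswap⟩, fun _ => by lia, fun h => absurd h hjx⟩
  have := h.le_of_tightAdj hmin _ _ hadj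
  lia

theorem IsTightPath.indep_symmDiff_tail (h : IsTightPath M₁ M₂ I U₁ U₂ D₁ D₂ P)
    (hU : IsMinIndep M₁ U₁ I)
    (hmin : ∀ Q, IsTightPath M₁ M₂ I U₁ U₂ D₁ D₂ Q → P.length ≤ Q.length) :
    M₁.Indep ↑(symmDiff I P.tail.toFinset) := by
  let y (i : Fin (P.length - 1)) : α := P[(i : ℕ)]
  let x (i : Fin (P.length - 1)) : α := P[(i : ℕ) + 1]
  have hind : M₁.Indep ((I \ y '' ↑{i | y i ∈ I}) ∪ x '' ↑{i | y i ∈ I}) := by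
    have hlen (i : Fin (P.length - 1)) : (i : ℕ) + 1 < P.length := by lia
    have hind := indep_of_triangular_exchange x y (fun i => toLex (-U₁ (x i), i))
      {i | y i ∈ I} (fun i _ j _ hij => (Prod.ext_iff.1 (toLex.injective hij)).2) hU.1
      (fun i hi => ?_) fun i hi j hj hij => ?_
    · simpa using hind
    · rw [Finset.mem_filter_univ] at hi
      obtain ⟨hxI, hx, -⟩ := h.indep_swap (hlen i) hi
      exact (indep_insert_erase_iff hU.1 hxI).1 hx
    · rw [Finset.mem_filter_univ] at hi hj
      rw [Prod.Lex.toLex_lt_toLex, neg_lt_neg_iff, neg_inj] at hij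
      exact h.mem_closure_sdiff hU hmin (hlen i) (hlen j) hi hj (hij.imp_right (.imp_left .symm))
  refine hind.subset fun v hv => ?_
  simp only [Finset.mem_coe, Finset.mem_symmDiff, List.mem_toFinset] at hv
  obtain ⟨hvI, hvP⟩ | ⟨hvP, hvI⟩ := hv
  · refine .inl ⟨hvI, ?_⟩
    rintro ⟨i, -, rfl⟩
    have hy : y i ∈ P.head h.ne_nil :: P.tail := by
      rw [List.cons_head_tail]; exact List.getElem_mem _
    obtain heq | hmem := List.mem_cons.1 hy
    · exact (h.head _ (List.head?_eq_some_head h.ne_nil)).1.1 (heq ▸ hvI)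
    · exact hvP hmem
  · obtain ⟨i, hi, hiI, rfl⟩ := h.isXPath.exists_getElem_eq_of_mem_tail hvP hvI
    exact .inr ⟨⟨i, by lia⟩, by simpa using hiI, rfl⟩

theorem IsTightPath.indep_symmDiff (h : IsTightPath M₁ M₂ I U₁ U₂ D₁ D₂ P)
    (hU : IsMinIndep M₁ U₁ I) (hD : ∀ x, memX M₁ I x → D₁ ≤ U₁ x)
    (hmin : ∀ Q, IsTightPath M₁ M₂ I U₁ U₂ D₁ D₂ Q → P.length ≤ Q.length) :
    M₁.Indep ↑(symmDiff I P.toFinset) := by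
  have hcl : (↑(symmDiff I P.tail.toFinset) : Set α) ⊆ M₁.closure I := fun v hv => by
    simp only [Finset.mem_coe, Finset.mem_symmDiff, List.mem_toFinset] at hv
    obtain ⟨hvI, -⟩ | ⟨hvP, hvI⟩ := hv
    · exact M₁.mem_closure_of_mem hvI hU.1.subset_ground
    · obtain ⟨i, hi, hiI, rfl⟩ := h.isXPath.exists_getElem_eq_of_mem_tail hvP hvI
      exact h.mem_closure hU hD hmin hi hiI
  obtain ⟨x, l, rfl⟩ := List.exists_cons_of_ne_nil h.ne_nil
  obtain ⟨hxI, hx⟩ := (h.head x rfl).1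
  have hxcl : x ∈ M₁.E \ M₁.closure ↑I :=
    ⟨hx.subset_ground (by simp),
      (hU.1.notMem_closure_iff_of_notMem hxI (hx.subset_ground (by simp))).2 (by simpa using hx)⟩
  have hins := (h.indep_symmDiff_tail hU hmin).insert_indep_iff.2
    (.inl ⟨hxcl.1, fun hxc => hxcl.2 (M₁.closure_subset_closure_of_subset_closure hcl hxc)⟩)
  rw [← Finset.coe_insert] at hins
  refine hins.subset (Finset.coe_subset.2 fun v hv => ?_)
  simp only [List.tail_cons, List.toFinset_cons, Finset.mem_insert, Finset.mem_symmDiff] at hv ⊢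
  tauto

theorem IsTightPath.isMinIndep_symmDiff (h : IsTightPath M₁ M₂ I U₁ U₂ D₁ D₂ P)
    (hU : IsMinIndep M₁ U₁ I) (hD : ∀ x, memX M₁ I x → D₁ ≤ U₁ x)
    (hmin : ∀ Q, IsTightPath M₁ M₂ I U₁ U₂ D₁ D₂ Q → P.length ≤ Q.length) :
    IsMinIndep M₁ U₁ (symmDiff I P.toFinset) := by
  refine ⟨h.indep_symmDiff hU hD hmin, fun J hJ hcard => ?_⟩
  rw [h.isXPath.card_symmDiff hU.1] at hcard
  rw [setW_symmDiff U₁ I h.nodup, h.listW_left hU hD]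
  exact hU.setW_add_le_setW hD hJ hcard

theorem IsPathBound.isWeightSplitting_symmDiff (hb : IsPathBound M₁ M₂ W I U₁ U₂ D₁ D₂)
    (hP : IsTightPath M₁ M₂ I U₁ U₂ D₁ D₂ P)
    (hmin : ∀ Q, IsTightPath M₁ M₂ I U₁ U₂ D₁ D₂ Q → P.length ≤ Q.length) :
    IsWeightSplitting M₁ M₂ W (symmDiff I P.toFinset) U₁ U₂ where
  add_eq := hb.add_eq
  left := hP.isMinIndep_symmDiff hb.left hb.le_left hmin
  right := by
    rw [← List.toFinset_reverse]
    refine hP.reverse.isMinIndep_symmDiff hb.right hb.le_right fun Q hQ => ?_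
    simpa only [List.length_reverse] using hmin _ hQ.reverse

end ShortestTightPath

section Augmentation

variable {α : Type*} {M₁ M₂ : Matroid α} {W U₁ U₂ : α → ℤ} {I J : Finset α} {P : List α}
  {D₁ D₂ D : ℤ}

theorem exists_nodup_isChain_of_reflTransGen {r : α → α → Prop} {a b : α}
    (h : Relation.ReflTransGen r a b) :
    ∃ l : List α, l.head? = some a ∧ l.getLast? = some b ∧ l.IsChain r ∧ l.Nodup := by
  classical
  induction h with
  | refl => exact ⟨[a], by simp⟩
  | @tail b c _ hbc ih =>
    obtain ⟨l, hhead, hlast, hc, hnd⟩ := ih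
    by_cases hcl : c ∈ l
    · obtain ⟨s, t, rfl⟩ := List.append_of_mem hcl
      rw [← List.singleton_append, ← List.append_assoc] at hhead hc hnd
      refine ⟨s ++ [c], ?_, by simp, hc.left_of_append, hnd.of_append_left⟩
      rwa [List.head?_append_of_ne_nil _ (by simp)] at hhead
    · refine ⟨l ++ [c], by simp [hhead], by simp, List.isChain_append.2 ⟨hc, by simp, ?_⟩, ?_⟩
      · simpa [hlast] using hbc
      · simpa [List.nodup_append] using ⟨hnd, fun x hx h => hcl (h ▸ hx)⟩

variable [DecidableEq α]

theorem IsPathBound.raise (hb : IsPathBound M₁ M₂ W I U₁ U₂ D₁ D₂) {R : Set α}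
    (hadj : ∀ u ∈ R, ∀ v, TightAdj M₁ M₂ I U₁ U₂ u v → v ∈ R)
    (hsource : ∀ x, memX M₁ I x → U₁ x = D₁ → x ∈ R)
    (hsink : ∀ x ∈ R, memX M₂ I x → U₂ x ≠ D₂) :
    IsPathBound M₁ M₂ W I (U₁ + R.indicator 1) (U₂ - R.indicator 1) (D₁ + 1) D₂ := by
  classical
  obtain ⟨hI₁, hswap₁⟩ := isMinIndep_iff_forall_swap.1 hb.left
  obtain ⟨hI₂, hswap₂⟩ := isMinIndep_iff_forall_swap.1 hb.right
  refine ⟨⟨by simp [← hb.add_eq], isMinIndep_iff_forall_swap.2 ⟨hI₁, fun y hy x hx hxy => ?_⟩,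
    isMinIndep_iff_forall_swap.2 ⟨hI₂, fun y hy x hx hxy => ?_⟩⟩,
    fun x hx => ?_, fun x hx => ?_⟩ <;>
  simp only [Pi.add_apply, Pi.sub_apply, Set.indicator_apply, Pi.one_apply]
  · have hle := hswap₁ y hy x hx hxy
    have htight : U₁ y = U₁ x → TightAdj M₁ M₂ I U₁ U₂ y x :=
      fun h => ⟨.inl ⟨hy, hx, hxy⟩, fun _ => h, fun h => absurd h hx⟩
    grind
  · have hle := hswap₂ y hy x hx hxy
    have htight : U₂ y = U₂ x → TightAdj M₁ M₂ I U₁ U₂ x y :=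
      fun h => ⟨.inr ⟨hx, hy, hxy⟩, fun h => absurd h hx, fun _ => h⟩
    grind
  · have := hb.le_left x hx
    grind
  · have := hb.le_right x hx
    grind

/-- Primal-dual step: raise on the set reachable along tight edges from the tight sources. -/
theorem IsPathBound.exists_add_one (hb : IsPathBound M₁ M₂ W I U₁ U₂ D₁ D₂)
    (hno : ∀ P, ¬ IsTightPath M₁ M₂ I U₁ U₂ D₁ D₂ P) :
    ∃ V₁ V₂, IsPathBound M₁ M₂ W I V₁ V₂ (D₁ + 1) D₂ := by
  let R : Set α :=
    {v | ∃ x, (memX M₁ I x ∧ U₁ x = D₁) ∧ Relation.ReflTransGen (TightAdj M₁ M₂ I U₁ U₂) x v}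
  refine ⟨_, _, hb.raise (R := R) (fun u ⟨x, hx, hxu⟩ v huv => ⟨x, hx, hxu.tail huv⟩)
    (fun x hx hD => ⟨x, ⟨hx, hD⟩, .refl⟩) ?_⟩
  rintro v ⟨x, hx, hxv⟩ hv hD
  obtain ⟨l, hhead, hlast, hc, hnd⟩ := exists_nodup_isChain_of_reflTransGen hxv
  exact hno l ⟨by rintro rfl; simp at hhead, hnd, hc, by simpa [hhead] using hx,
    by simpa [hlast] using ⟨hv, hD⟩⟩

theorem IsPathBound.exists_isPathBound_of_le (hb : IsPathBound M₁ M₂ W I U₁ U₂ D₁ D₂)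
    (hD : ∀ P, IsXPath M₁ M₂ I P → D ≤ listW W I P) (hle : D₁ + D₂ ≤ D) :
    ∃ V₁ V₂, IsPathBound M₁ M₂ W I V₁ V₂ (D - D₂) D₂ := by
  induction D, hle using Int.leInduction with
  | base => exact ⟨U₁, U₂, by rwa [add_sub_cancel_right]⟩
  | succ D _ ih =>
    obtain ⟨V₁, V₂, hV⟩ := ih fun P hP => by linarith [hD P hP]
    have hno : ∀ P, ¬ IsTightPath M₁ M₂ I V₁ V₂ (D - D₂) D₂ P := fun P hP => by
      obtain ⟨hX, hW⟩ := hV.isTightPath_iff.1 hP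
      linarith [hD P hX]
    rw [add_sub_right_comm]
    exact hV.exists_add_one hno

theorem IsPathBound.setW_add_le_setW (hb : IsPathBound M₁ M₂ W I U₁ U₂ D₁ D₂)
    (hJ : CommonIndep M₁ M₂ J) (hIJ : J.card = I.card + 1) :
    setW W I + (D₁ + D₂) ≤ setW W J := by
  rw [← hb.add_eq, setW_add, setW_add]
  linarith [hb.left.setW_add_le_setW hb.le_left hJ.1 hIJ,
    hb.right.setW_add_le_setW hb.le_right hJ.2 hIJ]

theorem IsPathBound.exists_isXPath (hb : IsPathBound M₁ M₂ W I U₁ U₂ D₁ D₂)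
    (hJ : CommonIndep M₁ M₂ J) (hIJ : J.card = I.card + 1) : ∃ P, IsXPath M₁ M₂ I P := by
  by_contra! hno
  obtain ⟨V₁, V₂, hV⟩ := hb.exists_isPathBound_of_le (D := setW W J - setW W I + 1)
    (fun P hP => absurd hP (hno P)) (by linarith [hb.setW_add_le_setW hJ hIJ])
  linarith [hV.setW_add_le_setW hJ hIJ]

/-- A shortest `X₁`–`X₂` path among those of minimum weight. -/
structure IsMinXPath (M₁ M₂ : Matroid α) (W : α → ℤ) (I : Finset α) (P : List α) : Prop where
  isXPath : IsXPath M₁ M₂ I P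
  listW_le : ∀ Q, IsXPath M₁ M₂ I Q → listW W I P ≤ listW W I Q
  length_le : ∀ Q, IsXPath M₁ M₂ I Q → listW W I Q = listW W I P → P.length ≤ Q.length

theorem IsPathBound.exists_isMinXPath (hb : IsPathBound M₁ M₂ W I U₁ U₂ D₁ D₂)
    (hP : IsXPath M₁ M₂ I P) : ∃ Q, IsMinXPath M₁ M₂ W I Q := by
  obtain ⟨Q, hQ, hmin⟩ := exists_minimalFor_of_wellFoundedLT (IsXPath M₁ M₂ I)
    (fun Q => toLex ((listW W I Q - (D₁ + D₂)).toNat, Q.length)) ⟨P, hP⟩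
  have hlex (R : List α) (hR : IsXPath M₁ M₂ I R) : listW W I Q < listW W I R ∨
      listW W I Q = listW W I R ∧ Q.length ≤ R.length := by
    have hle := (le_total _ _).elim (hmin hR) id
    rw [Prod.Lex.toLex_le_toLex] at hle
    have := hb.le_listW hQ
    have := hb.le_listW hR
    grind
  exact ⟨Q, hQ, fun R hR => by grind, fun R hR h => by grind⟩

theorem IsMinXPath.exists_isWeightSplitting_symmDiff (hP : IsMinXPath M₁ M₂ W I P)
    (hb : IsPathBound M₁ M₂ W I U₁ U₂ D₁ D₂) :
    ∃ V₁ V₂, IsWeightSplitting M₁ M₂ W (symmDiff I P.toFinset) V₁ V₂ := by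
  obtain ⟨V₁, V₂, hV⟩ := hb.exists_isPathBound_of_le hP.listW_le (hb.le_listW hP.isXPath)
  have htight {Q : List α} : IsTightPath M₁ M₂ I V₁ V₂ (listW W I P - D₂) D₂ Q ↔
      IsXPath M₁ M₂ I Q ∧ listW W I Q = listW W I P := by
    rw [hV.isTightPath_iff, sub_add_cancel]
  exact ⟨V₁, V₂, hV.isWeightSplitting_symmDiff (htight.2 ⟨hP.isXPath, rfl⟩)
    fun Q hQ => hP.length_le Q (htight.1 hQ).1 (htight.1 hQ).2⟩

theorem IsWeightSplitting.exists_isPathBound [M₁.Finite] [M₂.Finite]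
    (h : IsWeightSplitting M₁ M₂ W I U₁ U₂) : ∃ D₁ D₂, IsPathBound M₁ M₂ W I U₁ U₂ D₁ D₂ := by
  obtain ⟨D₁, hD₁⟩ := exists_le_of_memX (M := M₁) U₁ I
  obtain ⟨D₂, hD₂⟩ := exists_le_of_memX (M := M₂) U₂ I
  exact ⟨D₁, D₂, h, hD₁, hD₂⟩

end Augmentation

section Finite

variable {α : Type*} {M₁ M₂ : Matroid α} [M₁.Finite] [M₂.Finite] {W : α → ℤ} {I J : Finset α}
  {k : ℕ}

theorem CommonIndep.exists_isWeightSplitting (W : α → ℤ)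
    (hJ : CommonIndep M₁ M₂ J) :
    ∃ I U₁ U₂, I.card = J.card ∧ IsWeightSplitting M₁ M₂ W I U₁ U₂ := by
  classical
  induction hk : J.card generalizing J with
  | zero =>
    refine ⟨∅, W, 0, rfl, add_zero W, ⟨by simp, fun J _ hJ => ?_⟩, ⟨by simp, fun J _ hJ => ?_⟩⟩
    · rw [Finset.card_eq_zero.1 hJ]
    · rw [Finset.card_eq_zero.1 hJ]
  | succ k ih =>
    obtain ⟨J', hJ'J, hJ'⟩ := Finset.exists_subset_card_eq (show k ≤ J.card by lia)
    obtain ⟨I, U₁, U₂, hI, hU⟩ :=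
      ih ⟨hJ.1.subset (by simpa using hJ'J), hJ.2.subset (by simpa using hJ'J)⟩ hJ'
    obtain ⟨D₁, D₂, hb⟩ := hU.exists_isPathBound
    obtain ⟨P, hP⟩ := hb.exists_isXPath hJ (by lia)
    obtain ⟨Q, hQ⟩ := hb.exists_isMinXPath hP
    obtain ⟨V₁, V₂, hV⟩ := hQ.exists_isWeightSplitting_symmDiff hb
    exact ⟨_, V₁, V₂, by rw [hQ.isXPath.card_symmDiff hU.left.1, hI], hV⟩

theorem IsMinWtOfSize.exists_isWeightSplitting
    (hI : IsMinWtOfSize M₁ M₂ W k I) : ∃ U₁ U₂, IsWeightSplitting M₁ M₂ W I U₁ U₂ := by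
  obtain ⟨J, U₁, U₂, hJI, h⟩ := hI.1.exists_isWeightSplitting W
  have hle := hI.2.2 J ⟨h.left.1, h.right.1⟩ (hJI.trans hI.2.1)
  have hle₁ := h.left.2 I hI.1.1 hJI.symm
  have hle₂ := h.right.2 I hI.1.2 hJI.symm
  rw [← h.add_eq, setW_add, setW_add] at hle
  exact ⟨U₁, U₂, h.add_eq, h.left.of_setW_le hI.1.1 hJI.symm (by linarith),
    h.right.of_setW_le hI.1.2 hJI.symm (by linarith)⟩

theorem IsMinWtOfSize.symmDiff_of_isMinXPath [DecidableEq α]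
    (hI : IsMinWtOfSize M₁ M₂ W k I) {P : List α} (hP : IsMinXPath M₁ M₂ W I P) :
    IsMinWtOfSize M₁ M₂ W (k + 1) (symmDiff I P.toFinset) := by
  obtain ⟨U₁, U₂, hU⟩ := hI.exists_isWeightSplitting
  obtain ⟨D₁, D₂, hb⟩ := hU.exists_isPathBound
  obtain ⟨V₁, V₂, hV⟩ := hP.exists_isWeightSplitting_symmDiff hb
  rw [← hI.2.1, ← hP.isXPath.card_symmDiff hI.1.1]
  exact hV.isMinWtOfSize

end Finite

section Restrict

open scoped Matroid

variable {α : Type*} {M M₁ M₂ : Matroid α} {W : α → ℤ} {I : Finset α} {P : List α} {T : Set α}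
  {k : ℕ} {u v x : α}

theorem commonIndep_restrict_iff :
    CommonIndep (M₁ ↾ T) (M₂ ↾ T) I ↔ CommonIndep M₁ M₂ I ∧ (I : Set α) ⊆ T := by
  simp only [CommonIndep, Matroid.restrict_indep_iff]
  tauto

theorem IsMinWtOfSize.restrict (h : IsMinWtOfSize M₁ M₂ W k I) (hI : (I : Set α) ⊆ T) :
    IsMinWtOfSize (M₁ ↾ T) (M₂ ↾ T) W k I :=
  ⟨commonIndep_restrict_iff.2 ⟨h.1, hI⟩, h.2.1,
    fun J hJ => h.2.2 J (commonIndep_restrict_iff.1 hJ).1⟩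

theorem isMinWtOfSize_of_forall_restrict (K : Finset α)
    (h : ∀ T : Finset α, K ⊆ T → IsMinWtOfSize (M₁ ↾ ↑T) (M₂ ↾ ↑T) W k I) :
    IsMinWtOfSize M₁ M₂ W k I := by
  classical
  refine ⟨(commonIndep_restrict_iff.1 (h K subset_rfl).1).1, (h K subset_rfl).2.1,
    fun J hJ hcard => ?_⟩
  exact (h (K ∪ J) Finset.subset_union_left).2.2 J
    (commonIndep_restrict_iff.2 ⟨hJ, by simp⟩) hcard

variable [DecidableEq α]

theorem memX_restrict_iff (hI : (I : Set α) ⊆ T) :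
    memX (M ↾ T) I x ↔ memX M I x ∧ x ∈ T := by
  simp only [memX, Matroid.restrict_indep_iff, Finset.coe_insert, Set.insert_subset_iff]
  tauto

theorem exchAdj_restrict_iff (hI : (I : Set α) ⊆ T) :
    ExchAdj (M₁ ↾ T) (M₂ ↾ T) I u v ↔ ExchAdj M₁ M₂ I u v ∧ u ∈ T ∧ v ∈ T := by
  have herase (y : α) : (I : Set α) \ {y} ⊆ T := Set.sdiff_subset.trans hI
  simp only [ExchAdj, Matroid.restrict_indep_iff, Finset.coe_insert, Finset.coe_erase,
    Set.insert_subset_iff, herase]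
  have := @hI u
  have := @hI v
  simp only [Finset.mem_coe] at *
  tauto

theorem IsXPath.restrict (h : IsXPath M₁ M₂ I P) (hI : (I : Set α) ⊆ T) (hP : ∀ v ∈ P, v ∈ T) :
    IsXPath (M₁ ↾ T) (M₂ ↾ T) I P := by
  obtain ⟨hne, hc, hnd, h₁, h₂⟩ := h
  exact ⟨hne, hc.imp_of_mem_imp fun u v hu hv huv =>
    (exchAdj_restrict_iff hI).2 ⟨huv, hP u hu, hP v hv⟩, hnd,
    (memX_restrict_iff hI).2 ⟨h₁, hP _ (List.head_mem hne)⟩,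
    (memX_restrict_iff hI).2 ⟨h₂, hP _ (List.getLast_mem hne)⟩⟩

theorem IsXPath.of_restrict (h : IsXPath (M₁ ↾ T) (M₂ ↾ T) I P) (hI : (I : Set α) ⊆ T) :
    IsXPath M₁ M₂ I P := by
  obtain ⟨hne, hc, hnd, h₁, h₂⟩ := h
  exact ⟨hne, hc.imp fun u v huv => ((exchAdj_restrict_iff hI).1 huv).1, hnd,
    ((memX_restrict_iff hI).1 h₁).1, ((memX_restrict_iff hI).1 h₂).1⟩

theorem IsMinXPath.restrict (h : IsMinXPath M₁ M₂ W I P) (hI : (I : Set α) ⊆ T)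
    (hP : ∀ v ∈ P, v ∈ T) : IsMinXPath (M₁ ↾ T) (M₂ ↾ T) W I P where
  isXPath := h.isXPath.restrict hI hP
  listW_le Q hQ := h.listW_le Q (hQ.of_restrict hI)
  length_le Q hQ := h.length_le Q (hQ.of_restrict hI)

end Restrict

theorem symmDiff_minPath_is_min_weight_general {α : Type*} [DecidableEq α]
    (M₁ M₂ : Matroid α) (W : α → ℤ) (k : ℕ) (Ik : Finset α)
    (hIk : IsMinWtOfSize M₁ M₂ W k Ik) (P : List α) (hP : IsXPath M₁ M₂ Ik P)
    (hPmin : ∀ Q : List α, IsXPath M₁ M₂ Ik Q → listW W Ik P ≤ listW W Ik Q)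
    (hPlen : ∀ Q : List α, IsXPath M₁ M₂ Ik Q → listW W Ik Q = listW W Ik P →
      P.length ≤ Q.length) :
    IsMinWtOfSize M₁ M₂ W (k + 1) (symmDiff Ik P.toFinset) := by
  have hPath : IsMinXPath M₁ M₂ W Ik P := ⟨hP, hPmin, hPlen⟩
  refine isMinWtOfSize_of_forall_restrict (Ik ∪ P.toFinset) fun T hT => ?_
  have hI : (Ik : Set α) ⊆ T := Finset.coe_subset.2 (Finset.union_subset_left hT)
  have hPT : ∀ v ∈ P, v ∈ (T : Set α) := fun v hv =>
    Finset.union_subset_right hT (List.mem_toFinset.2 hv)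
  have := Matroid.restrict_finite (M := M₁) T.finite_toSet
  have := Matroid.restrict_finite (M := M₂) T.finite_toSet
  exact (hIk.restrict hI).symmDiff_of_isMinXPath (hPath.restrict hI hPT)

/-- Let `I_k` be a minimum-weight size-`k` common independent set, and let `P` be an
`X₁`–`X₂` path in the exchange graph of minimum weight, of minimum hop-length among the
`X₁`–`X₂` paths of minimum weight. Then `I_k Δ V(P)` is a common independent set of size
`k+1`, and it is a minimum-weight common independent set of size `k+1`. -/
theorem symmDiff_minPath_is_min_weight {α : Type*} [Fintype α] [DecidableEq α]
    (M₁ M₂ : Matroid α) (hE₁ : M₁.E = Set.univ) (hE₂ : M₂.E = Set.univ)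
    (W : α → ℤ) (k : ℕ) (Ik : Finset α) (hIk : IsMinWtOfSize M₁ M₂ W k Ik)
    (P : List α) (hP : IsXPath M₁ M₂ Ik P)
    (hPmin : ∀ Q : List α, IsXPath M₁ M₂ Ik Q → listW W Ik P ≤ listW W Ik Q)
    (hPlen : ∀ Q : List α, IsXPath M₁ M₂ Ik Q → listW W Ik Q = listW W Ik P →
      P.length ≤ Q.length) :
    IsMinWtOfSize M₁ M₂ W (k + 1) (symmDiff Ik P.toFinset) :=
  symmDiff_minPath_is_min_weight_general M₁ M₂ W k Ik hIk P hP hPmin hPlen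
end

section
/- Suppose W isolates a size-k common independent set I_k of matroids M₁ and M₂. Then the exchange graph 𝓔(M₁,M₂,I_k) contains no directed cycle of weight 0; consequently, every directed cycle of 𝓔(M₁,M₂,I_k) has strictly positive weight. -/
/-!
If some cycle of the exchange graph of `I` has nonpositive weight, take a shortest such cycle `C`.
Passing from `I` to `I ∆ C` preserves the cardinality, because a cycle alternates between `I` and
its complement, and adds the weight of `C`, so it remains to see that `I ∆ C` is independent in
both matroids. A chord of `C` cuts off a shorter cycle, which has positive weight. In terms of the
weights of the initial segments of `C`, this says that for `x ∈ C \ I` with predecessor `y` on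
`C`, any other `z ∈ C \ I` that can replace `y` in `M₁` has a smaller potential than `x`. Such a
triangular system of exchanges can be carried out simultaneously. Reversing all edges swaps the
two matroids.
-/

open scoped symmDiff

section Matroid

variable {α β : Type*} [Preorder β] {M : Matroid α} {I J : Set α}

-- A circuit of `J` would have a `q`-minimal element `x` outside `I`, and its other elements would
-- all lie in the closure of `I \ {y}`, where `y` is the exchange partner of `x`.
theorem indep_of_ordered_exchange (hI : M.Indep I) (hfin : (J \ I).Finite) (q : α → β)
    (hexch : ∀ x ∈ J \ I, ∃ y ∈ I \ J, M.Indep (insert x (I \ {y})) ∧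
      ∀ z ∈ J \ I, z ≠ x → M.Indep (insert z (I \ {y})) → q z < q x) :
    M.Indep J := by
  have hJE : J ⊆ M.E := by
    intro x hxJ
    by_cases hxI : x ∈ I
    · exact hI.subset_ground hxI
    · obtain ⟨y, -, hxy, -⟩ := hexch x ⟨hxJ, hxI⟩
      exact hxy.subset_ground (Set.mem_insert ..)
  by_contra hJ
  obtain ⟨D, hDJ, hD⟩ := Matroid.Dep.exists_isCircuit_subset ⟨hJ, hJE⟩
  have hDI : (D \ I).Nonempty := Set.sdiff_nonempty.2 fun hDI ↦ hD.not_indep (hI.subset hDI)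
  obtain ⟨x, ⟨hxD, hxI⟩, hxmin⟩ :=
    (hfin.subset (Set.sdiff_subset_sdiff_left hDJ)).exists_minimalFor q _ hDI
  obtain ⟨y, ⟨-, hyJ⟩, hxy, hlt⟩ := hexch x ⟨hDJ hxD, hxI⟩
  have hIy : M.Indep (I \ {y}) := hI.sdiff {y}
  have hDcl : D \ {x} ⊆ M.closure (I \ {y}) := by
    rintro z ⟨hzD, hzx⟩
    by_cases hzI : z ∈ I
    · exact M.mem_closure_of_mem ⟨hzI, fun hzy ↦ hyJ (hzy ▸ hDJ hzD)⟩ hIy.subset_ground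
    · by_contra hzcl
      have hz := hlt z ⟨hDJ hzD, hzI⟩ hzx
        ((hIy.notMem_closure_iff (hJE (hDJ hzD))).1 hzcl).1
      exact hz.not_ge (hxmin ⟨hzD, hzI⟩ hz.le)
  have hxcl : x ∈ M.closure (I \ {y}) :=
    M.closure_subset_closure_of_subset_closure hDcl (hD.mem_closure_sdiff_singleton_of_mem hxD)
  exact hxI ((hIy.mem_closure_iff'.1 hxcl).2 hxy).1

end Matroid

section Cycles

variable {α : Type*} {Adj : α → α → Prop} {l : List α}

namespace IsCycle

theorem ne_nil (h : IsCycle Adj l) : l ≠ [] := h.1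

theorem isChain (h : IsCycle Adj l) : l.IsChain Adj := h.2.1

theorem nodup (h : IsCycle Adj l) : l.Nodup := h.2.2.2

theorem reverse (h : IsCycle Adj l) : IsCycle (flip Adj) l.reverse := by
  obtain ⟨hne, hchain, hclose, hnodup⟩ := h
  refine ⟨List.reverse_ne_nil_iff.2 hne, List.isChain_reverse.2 hchain, ?_,
    List.nodup_reverse.2 hnodup⟩
  simpa only [flip, List.getLast_reverse, List.head_reverse] using hclose

theorem adj_getElem (h : IsCycle Adj l) {i : ℕ} (hi : i < l.length) :
    Adj l[i] (l[(i + 1) % l.length]'(Nat.mod_lt _ (Nat.zero_lt_of_lt hi))) := by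
  obtain ⟨hne, hchain, hclose, -⟩ := h
  rcases Nat.lt_or_ge (i + 1) l.length with hi' | hi'
  · simpa only [Nat.mod_eq_of_lt hi'] using List.isChain_iff_getElem.1 hchain i hi'
  · obtain rfl : i = l.length - 1 := by lia
    simpa only [List.getLast_eq_getElem, List.head_eq_getElem, Nat.sub_add_cancel
      (List.length_pos_iff.2 hne), Nat.mod_self] using hclose

theorem rotate (h : IsCycle Adj l) (n : ℕ) : IsCycle Adj (l.rotate n) := by
  have hlen : 0 < l.length := List.length_pos_iff.2 h.ne_nil
  refine ⟨List.rotate_eq_nil_iff.not.2 h.ne_nil, List.isChain_iff_getElem.2 fun k hk ↦ ?_, ?_,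
    List.nodup_rotate.2 h.nodup⟩
  · have hadj := h.adj_getElem (Nat.mod_lt (k + n) hlen)
    simpa only [List.getElem_rotate, Nat.mod_add_mod, Nat.add_right_comm k n 1] using hadj
  · have hadj := h.adj_getElem (Nat.mod_lt (l.length - 1 + n) hlen)
    have hwrap : l.length - 1 + n + 1 = l.length + n := by lia
    simpa only [List.getLast_eq_getElem, List.head_eq_getElem, List.getElem_rotate,
      List.length_rotate, Nat.mod_add_mod, hwrap, Nat.add_mod_left, Nat.zero_add] using hadj

theorem take_of_adj (h : IsCycle Adj l) {n : ℕ} (hn : 0 < n) (hnl : n ≤ l.length)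
    (hadj : Adj l[n - 1] l[0]) : IsCycle Adj (l.take n) := by
  have hne : l.take n ≠ [] := by
    simpa only [ne_eq, List.take_eq_nil_iff, not_or] using ⟨hn.ne', h.ne_nil⟩
  refine ⟨hne, h.isChain.take n, ?_, h.nodup.sublist (List.take_sublist n l)⟩
  simpa only [List.getLast_eq_getElem, List.head_eq_getElem, List.getElem_take, List.length_take,
    Nat.min_eq_left hnl] using hadj

theorem sum_map_eq_zero {G : Type*} [AddCommGroup G] [IsAddTorsionFree G] (h : IsCycle Adj l)
    {f : α → G} (hf : ∀ x y, Adj x y → f y = -f x) :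
    (l.map f).sum = 0 := by
  have hshift : (l.rotate 1).map f = (l.map f).map (-·) :=
    List.ext_getElem (by simp only [List.length_map, List.length_rotate]) fun i _ hi ↦ by
      simpa only [List.getElem_map, List.getElem_rotate] using
        hf _ _ (h.adj_getElem (by simpa only [List.length_map] using hi))
  have hneg : (l.map f).sum = -(l.map f).sum := calc
    (l.map f).sum = ((l.rotate 1).map f).sum := ((l.rotate_perm 1).map f).sum_eq.symm
    _ = -(l.map f).sum := by rw [hshift, ← List.sum_neg]
  exact self_eq_neg.1 hneg

theorem adj_prev [DecidableEq α] (h : IsCycle Adj l) {x : α} (hx : x ∈ l) :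
    Adj (l.prev x hx) x := by
  have hlen : 0 < l.length := List.length_pos_iff.2 h.ne_nil
  obtain ⟨i, hi, rfl⟩ := List.getElem_of_mem hx
  have hadj := h.adj_getElem (Nat.mod_lt (i + (l.length - 1)) hlen)
  have hwrap : i + (l.length - 1) + 1 = i + l.length := by lia
  simpa only [List.prev_getElem l h.nodup, Nat.mod_add_mod, hwrap, Nat.add_mod_right,
    Nat.mod_eq_of_lt hi] using hadj

end IsCycle

variable {R : Type*} [AddCommMonoid R] [LinearOrder R] {wt : α → R}

/-- A directed cycle of nonpositive weight such that every shorter directed cycle has positive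
weight. Cycles are vertex lists as in `IsCycle`, and `wt` assigns the vertex weights. -/
structure IsShortestNonposCycle (Adj : α → α → Prop) (wt : α → R) (l : List α) : Prop where
  isCycle : IsCycle Adj l
  weight_nonpos : (l.map wt).sum ≤ 0
  weight_pos_of_shorter : ∀ c, IsCycle Adj c → c.length < l.length → 0 < (c.map wt).sum

/-- The potential of a vertex `x` of the cycle `l`: the weight of the part of `l` before `x`. It
depends on the vertex at which the list `l` starts. -/
def prefixWeight [DecidableEq α] (wt : α → R) (l : List α) (x : α) : R :=
  ((l.take (l.idxOf x)).map wt).sum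

theorem IsCycle.exists_isShortestNonposCycle (h : IsCycle Adj l) (hwt : (l.map wt).sum ≤ 0) :
    ∃ c, IsShortestNonposCycle Adj wt c := by
  obtain ⟨c, ⟨hc, hcwt⟩, hmin⟩ :=
    (measure List.length).wf.has_min {c : List α | IsCycle Adj c ∧ (c.map wt).sum ≤ 0} ⟨l, h, hwt⟩
  exact ⟨c, hc, hcwt, fun d hd hlt ↦ not_le.1 fun hdwt ↦ hmin d ⟨hd, hdwt⟩ hlt⟩

namespace IsShortestNonposCycle

theorem reverse (h : IsShortestNonposCycle Adj wt l) :
    IsShortestNonposCycle (flip Adj) wt l.reverse where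
  isCycle := h.isCycle.reverse
  weight_nonpos := by simpa only [List.map_reverse, List.sum_reverse] using h.weight_nonpos
  weight_pos_of_shorter c hc hlt := by
    simpa only [List.map_reverse, List.sum_reverse] using
      h.weight_pos_of_shorter c.reverse hc.reverse
        (by simpa only [List.length_reverse] using hlt)

theorem weight_take_rotate_pos (h : IsShortestNonposCycle Adj wt l) {i n : ℕ} (hn : 0 < n)
    (hnl : n < l.length)
    (hadj : Adj (l[(n - 1 + i) % l.length]'(Nat.mod_lt _ (by lia)))
      (l[i % l.length]'(Nat.mod_lt _ (by lia)))) :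
    0 < (((l.rotate i).take n).map wt).sum := by
  refine h.weight_pos_of_shorter _ ((h.isCycle.rotate i).take_of_adj hn ?_ ?_) ?_
  · simpa only [List.length_rotate] using hnl.le
  · simpa only [List.getElem_rotate, Nat.zero_add] using hadj
  · simpa only [List.length_take, List.length_rotate, inf_lt_right, not_le] using hnl

-- The chord closes the arc of the cycle from `y` to the predecessor of `x` to a shorter cycle. The
-- weight of this arc is the potential difference if `y` comes before `x` in the list; otherwise it
-- exceeds the difference by the weight of the whole cycle, which is nonpositive.
theorem prefixWeight_lt_of_adj_prev [IsOrderedCancelAddMonoid R] [DecidableEq α]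
    (h : IsShortestNonposCycle Adj wt l) {x y : α} (hx : x ∈ l) (hy : y ∈ l) (hyx : y ≠ x)
    (hadj : Adj (l.prev x hx) y) :
    prefixWeight wt l y < prefixWeight wt l x := by
  obtain ⟨i, hi, rfl⟩ := List.getElem_of_mem hx
  obtain ⟨j, hj, rfl⟩ := List.getElem_of_mem hy
  rw [List.prev_getElem l h.isCycle.nodup] at hadj
  simp only [prefixWeight, h.isCycle.nodup.idxOf_getElem]
  rcases Nat.lt_or_gt_of_ne fun hji : j = i ↦ hyx (by simp only [hji]) with hji | hij
  · have harc : 0 < (((l.rotate j).take (i - j)).map wt).sum := by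
      apply h.weight_take_rotate_pos (by lia) (by lia)
      have hprev : (i + (l.length - 1)) % l.length = (i - j - 1 + j) % l.length := by
        rw [← Nat.add_mod_right (i - j - 1 + j)]
        congr 1
        lia
      simpa only [Nat.mod_eq_of_lt hj, hprev] using hadj
    have hsplit : l.take i = l.take j ++ (l.rotate j).take (i - j) := by
      rw [List.rotate_eq_drop_append_take hj.le, List.take_append_of_le_length (by grind),
        ← List.take_add, Nat.add_sub_cancel' hji.le]
    rw [hsplit, List.map_append, List.sum_append]
    exact lt_add_of_pos_right _ harc
  · have harc : 0 < (((l.rotate j).take (i + (l.length - j))).map wt).sum := by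
      apply h.weight_take_rotate_pos (by lia) (by lia)
      have hprev : i + (l.length - 1) = i + (l.length - j) - 1 + j := by lia
      simpa only [Nat.mod_eq_of_lt hj, hprev] using hadj
    have hsplit : (l.rotate j).take (i + (l.length - j)) = l.drop j ++ l.take i := by
      have hlen : (l.drop j).length = l.length - j := List.length_drop
      rw [List.rotate_eq_drop_append_take hj.le, Nat.add_comm i, ← hlen,
        List.take_length_add_append, List.take_take, Nat.min_eq_left hij.le]
    have hcycle : ((l.drop j).map wt).sum + ((l.take j).map wt).sum ≤ 0 := by
      simpa only [← List.sum_append, ← List.map_append, ← List.rotate_eq_drop_append_take hj.le,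
        ((l.rotate_perm j).map wt).sum_eq] using h.weight_nonpos
    rw [hsplit, List.map_append, List.sum_append] at harc
    exact lt_of_add_lt_add_left (hcycle.trans_lt harc)

end IsShortestNonposCycle

end Cycles

section ExchangeGraph

variable {α : Type*} [DecidableEq α] {M₁ M₂ : Matroid α} {I : Finset α} {l : List α}

theorem flip_exchAdj (M₁ M₂ : Matroid α) (I : Finset α) :
    flip (ExchAdj M₁ M₂ I) = ExchAdj M₂ M₁ I := by
  ext x y
  simp only [flip, ExchAdj]
  tauto

theorem ExchAdj.mem_iff_notMem {x y : α} (h : ExchAdj M₁ M₂ I x y) : y ∈ I ↔ x ∉ I := by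
  simp only [ExchAdj] at h
  tauto

theorem exchAdj_iff_of_mem {x y : α} (hx : x ∈ I) :
    ExchAdj M₁ M₂ I x y ↔ y ∉ I ∧ M₁.Indep (insert y (I \ {x} : Set α)) := by
  simp only [ExchAdj, hx, not_true_eq_false, true_and, false_and, or_false, Finset.coe_insert,
    Finset.coe_erase]

theorem setW_symmDiff_s4 (W : α → ℤ) (I C : Finset α) :
    setW W (I ∆ C) = setW W I + ∑ x ∈ C, exchWt W I x := by
  have hC : ∑ x ∈ C, exchWt W I x = -∑ x ∈ I ∩ C, W x + ∑ x ∈ C \ I, W x := by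
    simp only [exchWt, Finset.sum_ite, Finset.sum_neg_distrib, Finset.filter_mem_eq_inter,
      Finset.filter_notMem_eq_sdiff, Finset.inter_comm C I]
  have hI : ∑ x ∈ I, W x = ∑ x ∈ I ∩ C, W x + ∑ x ∈ I \ C, W x :=
    (Finset.sum_inter_add_sum_sdiff I C W).symm
  have hIC : ∑ x ∈ I ∆ C, W x = ∑ x ∈ I \ C, W x + ∑ x ∈ C \ I, W x :=
    Finset.sum_union disjoint_sdiff_sdiff
  rw [setW, setW, hIC, hI, hC]
  ring

theorem setW_symmDiff_toFinset (W : α → ℤ) (I : Finset α) (hl : l.Nodup) :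
    setW W (I ∆ l.toFinset) = setW W I + listW W I l := by
  rw [setW_symmDiff_s4, listW, List.sum_toFinset _ hl]

theorem IsCycle.card_symmDiff_toFinset (h : IsCycle (ExchAdj M₁ M₂ I) l) :
    (I ∆ l.toFinset).card = I.card := by
  have hone : listW (fun _ ↦ 1) I l = 0 := h.sum_map_eq_zero fun x y hxy ↦ by
    by_cases hx : x ∈ I <;> simp [exchWt, hxy.mem_iff_notMem, hx]
  have hcard := setW_symmDiff_toFinset (fun _ ↦ 1) I h.nodup
  simpa [setW, hone] using hcard

theorem IsCycle.symmDiff_toFinset_ne (h : IsCycle (ExchAdj M₁ M₂ I) l) :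
    I ∆ l.toFinset ≠ I := by
  simpa [symmDiff_eq_left, List.toFinset_eq_empty_iff] using h.ne_nil

namespace IsShortestNonposCycle

variable {R : Type*} [AddCommMonoid R] [LinearOrder R] [IsOrderedCancelAddMonoid R] {wt : α → R}

theorem indep_symmDiff_toFinset (h : IsShortestNonposCycle (ExchAdj M₁ M₂ I) wt l)
    (hI : M₁.Indep I) : M₁.Indep (I ∆ l.toFinset : Finset α) := by
  have hsub : ∀ x ∈ (↑(I ∆ l.toFinset) \ I : Set α), x ∈ l ∧ x ∉ I := by
    intro x hx
    simp only [Set.mem_sdiff, Finset.mem_coe, Finset.mem_symmDiff, List.mem_toFinset] at hx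
    tauto
  refine indep_of_ordered_exchange hI
    ((Finset.finite_toSet _).subset Set.sdiff_subset) (prefixWeight wt l) ?_
  intro x hx
  obtain ⟨hxl, hxI⟩ := hsub x hx
  have hadj := h.isCycle.adj_prev hxl
  have hyI : l.prev x hxl ∈ I := by
    simpa only [hxI, false_iff, not_not] using hadj.mem_iff_notMem
  refine ⟨l.prev x hxl, ⟨hyI, ?_⟩, ((exchAdj_iff_of_mem hyI).1 hadj).2, fun z hz hzx hind ↦ ?_⟩
  · simp only [Finset.mem_coe, Finset.mem_symmDiff, List.mem_toFinset, hyI, List.prev_mem,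
      not_true_eq_false, and_false, or_self, not_false_eq_true]
  · obtain ⟨hzl, hzI⟩ := hsub z hz
    exact h.prefixWeight_lt_of_adj_prev hxl hzl hzx ((exchAdj_iff_of_mem hyI).2 ⟨hzI, hind⟩)

theorem commonIndep_symmDiff_toFinset (h : IsShortestNonposCycle (ExchAdj M₁ M₂ I) wt l)
    (hI : CommonIndep M₁ M₂ I) : CommonIndep M₁ M₂ (I ∆ l.toFinset) := by
  have hrev : IsShortestNonposCycle (ExchAdj M₂ M₁ I) wt l.reverse :=
    flip_exchAdj M₁ M₂ I ▸ h.reverse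
  refine ⟨h.indep_symmDiff_toFinset hI.1, ?_⟩
  simpa only [List.toFinset_reverse] using hrev.indep_symmDiff_toFinset hI.2

end IsShortestNonposCycle

end ExchangeGraph

theorem no_zero_cycle_of_isolates_general {α : Type*} [DecidableEq α] (M₁ M₂ : Matroid α)
    (W : α → ℤ) (k : ℕ) (Ik : Finset α) (hiso : Isolates M₁ M₂ W k Ik) (l : List α)
    (hl : IsCycle (ExchAdj M₁ M₂ Ik) l) : 0 < listW W Ik l := by
  by_contra! hwt
  obtain ⟨c, hc⟩ := hl.exists_isShortestNonposCycle (wt := exchWt W Ik) hwt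
  obtain ⟨hindep, hcard, hmin⟩ := hiso
  have hlt : setW W Ik < setW W (Ik ∆ c.toFinset) :=
    hmin _ (hc.commonIndep_symmDiff_toFinset hindep)
      (hc.isCycle.card_symmDiff_toFinset.trans hcard) hc.isCycle.symmDiff_toFinset_ne
  rw [setW_symmDiff_toFinset W Ik hc.isCycle.nodup] at hlt
  exact (lt_add_iff_pos_right _).1 hlt |>.not_ge hc.weight_nonpos

/-- If `W` isolates a size-`k` common independent set `I_k`, then the exchange graph
`𝓔(M₁,M₂,I_k)` contains no directed cycle of weight `0`; consequently, every directed
cycle of `𝓔(M₁,M₂,I_k)` has strictly positive weight. -/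
theorem no_zero_cycle_of_isolates {α : Type*} [Fintype α] [DecidableEq α]
    (M₁ M₂ : Matroid α) (hE₁ : M₁.E = Set.univ) (hE₂ : M₂.E = Set.univ)
    (W : α → ℤ) (k : ℕ) (Ik : Finset α) (hiso : Isolates M₁ M₂ W k Ik) :
    (∀ l : List α, IsCycle (ExchAdj M₁ M₂ Ik) l → listW W Ik l ≠ 0) ∧
    (∀ l : List α, IsCycle (ExchAdj M₁ M₂ Ik) l → 0 < listW W Ik l) :=
  have hpos := no_zero_cycle_of_isolates_general M₁ M₂ W k Ik hiso
  ⟨fun l hl ↦ (hpos l hl).ne', hpos⟩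
end
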